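/- Suppose α has an adjusted nearest integer expansion with liminf_{i→∞} a_i = 2, and let d_n^± be the quantities associated to γ_*. Let θ_1 := (√13 − 3)/2. If ε_{i−2} a_{i−2} = −2 and σ ∈ {+1, −1} satisfies σ·d_{i−3}^+ ≤ 0, then (3 − ᾱ_{i−3} − σ·d_{i−3}^−)/((11 − √10)/3 − ᾱ_{i−3}) ≥ (3 − θ_1 − θ_1/(1 − θ_1))/((11 − √10)/3 − θ_1). -/

import Mathlib

open Filter Finset

attribute [local instance] Classical.propDecidable

/-- Distance from `x` to the nearest integer, `‖x‖`. -/
noncomputable def nint (x : ℝ) : ℝ := |x - round x|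

/-- The two-sided inhomogeneous approximation constant
`M(α,γ) = liminf_{|n|→∞} |n|·‖nα-γ‖`. -/
noncomputable def Mval (α γ : ℝ) : ℝ :=
  Filter.liminf (fun n : ℤ => (|n| : ℝ) * nint (n * α - γ)) Filter.cofinite

/-- Denominators `q_i` of a semi-regular continued fraction with partial quotients `a`
and signs `e`: `q_0 = 1`, `q_1 = a_1`, `q_i = a_i q_{i-1} + ε_i q_{i-2}`. -/
noncomputable def qs (a e : ℕ → ℤ) : ℕ → ℤ
  | 0 => 1
  | 1 => a 1
  | i + 2 => a (i + 2) * qs a e (i + 1) + e (i + 2) * qs a e i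

/-- Reversed tails `ᾱ_i = q_{i-1}/q_i` (with `ᾱ_0 = 0`). -/
noncomputable def ab (a e : ℕ → ℤ) (i : ℕ) : ℝ :=
  if i = 0 then 0 else (qs a e (i - 1) : ℝ) / (qs a e i : ℝ)

/-- An adjusted nearest integer expansion of `α`: a semi-regular continued fraction
`α = 1/(a_1 + ε_2/(a_2 + ε_3/(a_3 + ⋯)))` with tails `t i = α_i`, satisfying the
conditions (i)-(iv) of an adjusted expansion. -/
structure ANIE (α : ℝ) where
  /-- partial quotients `a_i` (for `i ≥ 1`) -/
  a : ℕ → ℤ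
  /-- signs `ε_i` -/
  e : ℕ → ℤ
  /-- tails: `t i = α_i`, `t 0 = α` -/
  t : ℕ → ℝ
  ha : ∀ i, 1 ≤ i → 2 ≤ a i
  he : ∀ i, e i = 1 ∨ e i = -1
  he1 : e 1 = 1
  ht0 : t 0 = α
  htpos : ∀ i, 0 < t i
  htlt1 : ∀ i, t i < 1
  hrec : ∀ i, t i = 1 / ((a (i + 1) : ℝ) + (e (i + 2) : ℝ) * t (i + 1))
  /-- condition (i): `a_i = 2` implies `ε_i = +1` or `ε_{i+1} = +1` -/
  hcond1 : ∀ i, 1 ≤ i → a i = 2 → e i = 1 ∨ e (i + 1) = 1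
  /-- condition (ii): if `a_i = 2`, `ε_i = -1` then `1/ᾱ_{i-1} - 1/α_i ≥ 1` -/
  hcond2 : ∀ i, 1 ≤ i → a i = 2 → e i = -1 → 1 / ab a e (i - 1) - 1 / t i ≥ 1
  /-- condition (iii): if `a_i = 2`, `ε_{i+1} = -1` then `1/α_i - 1/ᾱ_{i-1} > 1` -/
  hcond3 : ∀ i, 1 ≤ i → a i = 2 → e (i + 1) = -1 → 1 / t i - 1 / ab a e (i - 1) > 1
  /-- condition (iv): no block `2, (-3,)^k, -2` in the sequence `(ε_i a_i)` -/
  hcond4 : ∀ i k, 1 ≤ i →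
    ¬(e i * a i = 2 ∧ (∀ j, j < k → e (i + 1 + j) * a (i + 1 + j) = -3) ∧
        e (i + 1 + k) * a (i + 1 + k) = -2)

namespace ANIE

variable {α : ℝ}

/-- `D n = D_{n-1} = α_0 α_1 ⋯ α_{n-1}` (so `D 0 = 1`, `D 1 = α`). -/
noncomputable def D (E : ANIE α) (n : ℕ) : ℝ := ∏ j ∈ Finset.range n, E.t j

/-- The number of indices `1 ≤ k ≤ i` with `a_k` odd. -/
noncomputable def oddIdx (E : ANIE α) (i : ℕ) : ℕ :=
  ((Finset.Icc 1 i).filter fun k => Odd (E.a k)).card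

/-- `λ_i`: zero if `a_i` is even, `(-1)^j` if `a_i = a_{n_j}` is the `j`-th odd partial
quotient. -/
noncomputable def lam (E : ANIE α) (i : ℕ) : ℤ :=
  if Odd (E.a i) then (-1) ^ E.oddIdx i else 0

/-- `γ_* = Σ_{i≥1} (a_i - 1 + ε_i + λ_i)/2 · D_{i-1}`. -/
noncomputable def gammaStar (E : ANIE α) : ℝ :=
  ∑' k : ℕ,
    (((E.a (k + 1) : ℝ) - 1 + (E.e (k + 1) : ℝ) + (E.lam (k + 1) : ℝ)) / 2) * E.D (k + 1)

/-- `ᾱ_i = q_{i-1}/q_i`. -/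
noncomputable def abar (E : ANIE α) (i : ℕ) : ℝ := ab E.a E.e i

/-- `δ_i = -(-ε_1)(-ε_2)⋯(-ε_{i+1})`. -/
noncomputable def delta (E : ANIE α) (i : ℕ) : ℤ := -∏ j ∈ Finset.Icc 1 (i + 1), (-E.e j)

/-- `d_n^- = (Σ_{i=1}^n t_i δ_{i-1} q_{i-1}) / (δ_{n-1} q_n)` for `γ_*` (`t_i = λ_i`). -/
noncomputable def dminus (E : ANIE α) (n : ℕ) : ℝ :=
  (∑ i ∈ Finset.Icc 1 n, (E.lam i : ℝ) * (E.delta (i - 1) : ℝ) * (qs E.a E.e (i - 1) : ℝ)) /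
    ((E.delta (n - 1) : ℝ) * (qs E.a E.e n : ℝ))

/-- `d_n^+ = (Σ_{i=n+1}^∞ t_i D_{i-1}) / D_{n-1}` for `γ_*` (`t_i = λ_i`). -/
noncomputable def dplus (E : ANIE α) (n : ℕ) : ℝ :=
  (∑' k : ℕ, (E.lam (n + 1 + k) : ℝ) * E.D (n + 1 + k)) / E.D n

/-- `i ∈ S(γ_*)`: `|d_i^-| ≤ 1 - ᾱ_i` and `-(1-ε_{i+1}α_i) ≤ d_i^+ ≤ 1+ε_{i+1}α_i`. -/
def inS (E : ANIE α) (i : ℕ) : Prop :=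
  |E.dminus i| ≤ 1 - E.abar i ∧
    -(1 - (E.e (i + 1) : ℝ) * E.t i) ≤ E.dplus i ∧
      E.dplus i ≤ 1 + (E.e (i + 1) : ℝ) * E.t i

end ANIE

namespace ANIE

variable {α : ℝ}

/-- `s_n`: the value of `d_n^-` normalised by the sign of the last odd index. -/
noncomputable def sn (E : ANIE α) (n : ℕ) : ℝ := (-1) ^ E.oddIdx n * E.dminus n

lemma qs_pos (E : ANIE α) (n : ℕ) : 0 < qs E.a E.e n ∧ qs E.a E.e n < qs E.a E.e (n + 1) := by
  induction n with
  | zero =>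
    have := E.ha 1 le_rfl
    simp only [qs]
    omega
  | succ n ih =>
    obtain ⟨h1, h2⟩ := ih
    have ha := E.ha (n + 2) (by omega)
    refine ⟨by omega, ?_⟩
    show _ < E.a (n + 2) * qs E.a E.e (n + 1) + E.e (n + 2) * qs E.a E.e n
    rcases E.he (n + 2) with h | h <;> rw [h] <;> nlinarith

lemma abar_zero (E : ANIE α) : E.abar 0 = 0 := by simp [abar, ab]

lemma abar_succ (E : ANIE α) (n : ℕ) :
    E.abar (n + 1) = (qs E.a E.e n : ℝ) / (qs E.a E.e (n + 1) : ℝ) := by simp [abar, ab]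

lemma abar_pos (E : ANIE α) (n : ℕ) : 0 < E.abar (n + 1) := by
  rw [abar_succ]
  have h1 := (E.qs_pos n).1
  have h2 := (E.qs_pos (n + 1)).1
  positivity

lemma abar_nonneg (E : ANIE α) (n : ℕ) : 0 ≤ E.abar n := by
  cases n with
  | zero => rw [abar_zero]
  | succ n => exact (E.abar_pos n).le

lemma abar_rec (E : ANIE α) (n : ℕ) :
    E.abar (n + 1) * (E.a (n + 1) + E.e (n + 1) * E.abar n) = 1 := by
  have h2 : (0 : ℝ) < qs E.a E.e (n + 1) := by exact_mod_cast (E.qs_pos (n + 1)).1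
  have h1 : (0 : ℝ) < qs E.a E.e n := by exact_mod_cast (E.qs_pos n).1
  rw [abar_succ]
  cases n with
  | zero =>
    rw [abar_zero]
    simp only [qs] at *
    field_simp
    simp
  | succ n =>
    rw [abar_succ]
    have : (qs E.a E.e (n + 1 + 1) : ℝ) =
        E.a (n + 2) * qs E.a E.e (n + 1) + E.e (n + 2) * qs E.a E.e n := by
      rw [qs]; push_cast; rfl
    have h3 : (qs E.a E.e (n + 1) : ℝ) *
      (E.a (n + 1 + 1) + E.e (n + 1 + 1) * (qs E.a E.e n / qs E.a E.e (n + 1))) =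
        qs E.a E.e (n + 1 + 1) := by
      rw [this]; field_simp
    rw [div_mul_eq_mul_div, h3, div_self h2.ne']

lemma delta_sq (E : ANIE α) (n : ℕ) : (E.delta n : ℝ) ≠ 0 := by
  unfold delta
  push_cast
  rw [neg_ne_zero, Finset.prod_ne_zero_iff]
  intro i _
  rcases E.he i with h | h <;> simp [h]

lemma delta_succ (E : ANIE α) (n : ℕ) :
    (E.delta (n + 1) : ℝ) = E.delta n * (-E.e (n + 2)) := by
  unfold delta
  rw [Finset.prod_Icc_succ_top (by omega)]
  push_cast
  ring

lemma e_sq (E : ANIE α) (n : ℕ) : (E.e n : ℝ) * E.e n = 1 := by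
  rcases E.he n with h | h <;> simp [h]

lemma dminus_zero (E : ANIE α) : E.dminus 0 = 0 := by simp [dminus]

lemma dminus_succ (E : ANIE α) (n : ℕ) :
    E.dminus (n + 1) = E.abar (n + 1) * (E.lam (n + 1) - E.e (n + 1) * E.dminus n) := by
  have h2 : (0 : ℝ) < qs E.a E.e (n + 1) := by exact_mod_cast (E.qs_pos (n + 1)).1
  have h1 : (0 : ℝ) < qs E.a E.e n := by exact_mod_cast (E.qs_pos n).1
  rw [abar_succ]
  cases n with
  | zero =>
    rw [dminus_zero]
    have hd := E.delta_sq 0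
    simp [dminus]
    field_simp
  | succ n =>
    have hd := E.delta_sq n
    have hs := E.delta_succ n
    have he := E.e_sq (n + 2)
    have he0 : (E.e (n + 2) : ℝ) ≠ 0 := by
      intro h; rw [h] at he; simp at he
    unfold dminus
    rw [Finset.sum_Icc_succ_top (by omega)]
    simp only [Nat.add_sub_cancel]
    set S := ∑ i ∈ Finset.Icc 1 (n + 1),
      (E.lam i : ℝ) * (E.delta (i - 1) : ℝ) * (qs E.a E.e (i - 1) : ℝ)
    rw [hs]
    have h3 : (qs E.a E.e (n + 1 + 1) : ℝ) ≠ 0 := h2.ne'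
    show (S + E.lam (n + 2) * (E.delta n * -E.e (n + 2)) * _) / _ =
      _ * ((E.lam (n + 2) : ℝ) - E.e (n + 2) * _)
    field_simp
    have he' : (E.e (n + 2) : ℝ) ^ 2 = 1 := by rw [sq]; exact he
    ring_nf
    ring_nf at he'
    simp only [he']
    ring

lemma oddIdx_succ (E : ANIE α) (n : ℕ) :
    E.oddIdx (n + 1) = E.oddIdx n + if Odd (E.a (n + 1)) then 1 else 0 := by
  unfold oddIdx
  rw [← Finset.insert_Icc_right_eq_Icc_add_one (by omega), Finset.filter_insert]
  split_ifs with h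
  · rw [Finset.card_insert_of_notMem (by simp)]
  · rfl

lemma sn_zero (E : ANIE α) : E.sn 0 = 0 := by simp [sn, dminus_zero]

lemma sn_odd (E : ANIE α) (n : ℕ) (h : Odd (E.a (n + 1))) :
    E.sn (n + 1) = E.abar (n + 1) * (1 + E.e (n + 1) * E.sn n) := by
  unfold sn
  rw [dminus_succ]
  unfold lam
  rw [if_pos h, oddIdx_succ, if_pos h]
  push_cast
  have : ((-1 : ℝ) ^ E.oddIdx n) * (-1) ^ E.oddIdx n = 1 := by
    rw [← mul_pow]; simp
  rw [pow_succ]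
  linear_combination E.abar (n + 1) * this

lemma sn_even (E : ANIE α) (n : ℕ) (h : ¬ Odd (E.a (n + 1))) :
    E.sn (n + 1) = - E.abar (n + 1) * E.e (n + 1) * E.sn n := by
  unfold sn
  rw [dminus_succ]
  unfold lam
  rw [if_neg h, oddIdx_succ, if_neg h]
  push_cast
  ring

/-- The four kinds of partial quotients. -/
lemma a_cases (E : ANIE α) (n : ℕ) :
    E.a (n + 1) = 2 ∨ E.a (n + 1) = 3 ∨ ((4 : ℝ) ≤ E.a (n + 1) ∧ ¬ Odd (E.a (n + 1))) ∨
      ((5 : ℝ) ≤ E.a (n + 1) ∧ Odd (E.a (n + 1))) := by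
  have h := E.ha (n + 1) (by omega)
  by_cases h2 : E.a (n + 1) = 2
  · exact Or.inl h2
  by_cases h3 : E.a (n + 1) = 3
  · exact Or.inr (Or.inl h3)
  by_cases ho : Odd (E.a (n + 1))
  · refine Or.inr (Or.inr (Or.inr ⟨?_, ho⟩))
    have : (5 : ℤ) ≤ E.a (n + 1) := by
      rcases ho with ⟨k, hk⟩; omega
    exact_mod_cast this
  · refine Or.inr (Or.inr (Or.inl ⟨?_, ho⟩))
    have : (4 : ℤ) ≤ E.a (n + 1) := by omega
    exact_mod_cast this

lemma inv1 (E : ANIE α) (n : ℕ) :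
    E.abar n ≤ 2 / 3 ∧ (E.e (n + 1) = -1 → E.abar n ≤ 1 / 2) ∧ -1 / 4 ≤ E.sn n ∧
      E.sn n ≤ 1 / 2 := by
  induction n with
  | zero => rw [abar_zero, sn_zero]; norm_num
  | succ n ih =>
    obtain ⟨i1, i2, i3, i4⟩ := ih
    have hx0 := E.abar_nonneg n
    have hx' := E.abar_pos n
    have hr := E.abar_rec n
    have hc := E.hcond1 (n + 1) (by omega)
    have hso := E.sn_odd n
    have hse := E.sn_even n
    have hac := E.a_cases n
    generalize E.abar (n + 1) = x' at *
    generalize E.abar n = x at *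
    generalize E.sn (n + 1) = s' at *
    generalize E.sn n = s at *
    rcases hac with h | h | ⟨h, ho⟩ | ⟨h, ho⟩
    · have hs := hse (by rw [h]; decide)
      rw [h] at hr
      rcases E.he (n + 1) with he | he
      · rw [he] at hr hs
        push_cast at hr hs
        have : x' ≤ 1 / 2 := by nlinarith
        refine ⟨by linarith, fun _ => this, ?_, ?_⟩ <;> rw [hs] <;> nlinarith
      · have i2 := i2 he
        have hc : E.e (n + 1 + 1) = 1 := by
          rcases hc h with h | h
          · omega
          · exact h
        rw [he] at hr hs
        push_cast at hr hs
        have : x' ≤ 2 / 3 := by nlinarith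
        refine ⟨by linarith, by omega, ?_, ?_⟩ <;> rw [hs] <;> nlinarith
    · have hs := hso (by rw [h]; decide)
      rw [h] at hr
      rcases E.he (n + 1) with he | he
      · rw [he] at hr hs
        push_cast at hr hs
        have : x' ≤ 1 / 3 := by nlinarith
        refine ⟨by linarith, fun _ => by linarith, ?_, ?_⟩ <;> rw [hs] <;> nlinarith
      · have i2 := i2 he
        rw [he] at hr hs
        push_cast at hr hs
        have : x' ≤ 2 / 5 := by nlinarith
        refine ⟨by linarith, fun _ => by linarith, ?_, ?_⟩ <;> rw [hs] <;> nlinarith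
    · have hs := hse ho
      have hb : x' * 4 ≤ x' * E.a (n + 1) := mul_le_mul_of_nonneg_left h hx'.le
      rcases E.he (n + 1) with he | he
      · rw [he] at hr hs
        push_cast at hr hs
        have : x' ≤ 1 / 4 := by nlinarith
        refine ⟨by linarith, fun _ => by linarith, ?_, ?_⟩ <;> rw [hs] <;> nlinarith
      · have i2 := i2 he
        rw [he] at hr hs
        push_cast at hr hs
        have : x' ≤ 2 / 7 := by nlinarith
        refine ⟨by linarith, fun _ => by linarith, ?_, ?_⟩ <;> rw [hs] <;> nlinarith
    · have hs := hso ho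
      have hb : x' * 5 ≤ x' * E.a (n + 1) := mul_le_mul_of_nonneg_left h hx'.le
      rcases E.he (n + 1) with he | he
      · rw [he] at hr hs
        push_cast at hr hs
        have : x' ≤ 1 / 5 := by nlinarith
        refine ⟨by linarith, fun _ => by linarith, ?_, ?_⟩ <;> rw [hs] <;> nlinarith
      · have i2 := i2 he
        rw [he] at hr hs
        push_cast at hr hs
        have : x' ≤ 2 / 9 := by nlinarith
        refine ⟨by linarith, fun _ => by linarith, ?_, ?_⟩ <;> rw [hs] <;> nlinarith

/-- The key estimate before a block `-3`, unless the block is followed by `+2`. -/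
lemma key3 (E : ANIE α) (n : ℕ) (h3 : E.a (n + 1) = 3) (he3 : E.e (n + 1) = -1)
    (hn : ¬ (E.a (n + 2) = 2 ∧ E.e (n + 2) = 1)) :
    -E.sn n ≤ 3004 / 10000 - 4419 / 10000 * E.abar n := by
  cases n with
  | zero => rw [abar_zero, sn_zero]; norm_num
  | succ n =>
    obtain ⟨i1, i2, i3, i4⟩ := E.inv1 n
    have j2 := (E.inv1 (n + 1)).2.1 he3
    have hx0 := E.abar_nonneg n
    have hx' := E.abar_pos n
    have hr := E.abar_rec n
    have hso := E.sn_odd n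
    have hse := E.sn_even n
    rcases E.a_cases n with h | h | ⟨h, ho⟩ | ⟨h, ho⟩
    · have hs := hse (by rw [h]; decide)
      have he : E.e (n + 1) = 1 := by
        rcases E.hcond1 (n + 1) (by omega) h with h | h
        · exact h
        · omega
      have hc3 := E.hcond3 (n + 1) (by omega) h he3
      rw [h, he] at hr
      rw [he] at hs
      push_cast at hr hs
      suffices hsuff : E.sn n ≤ 158 / 1000 + 3 / 10 * E.abar n by
        rw [hs]
        nlinarith [mul_le_mul_of_nonneg_left hsuff hx'.le]
      cases n with
      | zero => rw [abar_zero, sn_zero]; norm_num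
      | succ m =>
        have hm := E.abar_pos m
        have ht : 1 / E.t (m + 1 + 1) < 7 / 2 := by
          rw [E.hrec (m + 1 + 1), one_div_one_div, h3]
          have tp := E.htpos (m + 1 + 1 + 1)
          rcases E.he (m + 1 + 1 + 2) with h5 | h5
          · have h6 : E.a (m + 1 + 1 + 1 + 1) ≠ 2 := fun h7 => hn ⟨h7, h5⟩
            have h7 : (3 : ℤ) ≤ E.a (m + 1 + 1 + 1 + 1) := by
              have := E.ha (m + 1 + 1 + 1 + 1) (by omega)
              omega
            have h8 : (3 : ℝ) ≤ E.a (m + 1 + 1 + 1 + 1) := by exact_mod_cast h7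
            have : E.t (m + 1 + 1 + 1) < 1 / 2 := by
              rw [E.hrec (m + 1 + 1 + 1)]
              have u1 := E.htpos (m + 1 + 1 + 1 + 1)
              have u2 := E.htlt1 (m + 1 + 1 + 1 + 1)
              apply one_div_lt_one_div_of_lt (by norm_num)
              rcases E.he (m + 1 + 1 + 1 + 2) with h9 | h9 <;> rw [h9] <;> push_cast <;> linarith
            rw [h5]; push_cast; linarith
          · rw [h5]; push_cast; linarith
        have hx4 : 2 / 5 < E.abar (m + 1) := by
          have : 1 / E.abar (m + 1) < 5 / 2 := by
            have : ab E.a E.e (m + 1 + 1 - 1) = E.abar (m + 1) := rfl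
            rw [this] at hc3
            linarith
          rw [div_lt_iff₀ hm] at this
          linarith
        obtain ⟨k1, k2, k3, k4⟩ := E.inv1 m
        have hrm := E.abar_rec m
        have hxm := E.abar_nonneg m
        have ham : E.a (m + 1) = 2 := by
          by_contra hne
          have h7 : (3 : ℤ) ≤ E.a (m + 1) := by
            have := E.ha (m + 1) (by omega)
            omega
          have h8 : (3 : ℝ) ≤ E.a (m + 1) := by exact_mod_cast h7
          have hb := mul_le_mul_of_nonneg_left h8 hm.le
          rcases E.he (m + 1) with h9 | h9
          · rw [h9] at hrm; push_cast at hrm; nlinarith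
          · have := k2 h9
            rw [h9] at hrm; push_cast at hrm; nlinarith
        have hsm := E.sn_even m (by rw [ham]; decide)
        rw [ham] at hrm
        rcases E.he (m + 1) with h9 | h9
        · rw [h9] at hrm hsm
          push_cast at hrm hsm
          rw [hsm]
          nlinarith
        · have := k2 h9
          rw [h9] at hrm hsm
          push_cast at hrm hsm
          have : E.abar (m + 1) ≤ 2 / 3 := by nlinarith
          have : E.sn (m + 1) ≤ E.abar (m + 1) * (1 / 2) := by
            rw [hsm]; nlinarith
          nlinarith
    · have hs := hso (by rw [h]; decide)
      have : 0 ≤ E.sn (n + 1) := by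
        rw [hs]
        apply mul_nonneg hx'.le
        rcases E.he (n + 1) with h9 | h9 <;> rw [h9] <;> push_cast <;> linarith
      linarith
    · have hs := hse ho
      have hb : E.abar (n + 1) * 4 ≤ E.abar (n + 1) * E.a (n + 1) :=
        mul_le_mul_of_nonneg_left h hx'.le
      rcases E.he (n + 1) with he | he
      · rw [he] at hr hs
        push_cast at hr hs
        have : E.abar (n + 1) ≤ 1 / 4 := by nlinarith
        rw [hs]; nlinarith
      · have i2 := i2 he
        rw [he] at hr hs
        push_cast at hr hs
        have : E.abar (n + 1) ≤ 2 / 7 := by nlinarith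
        rw [hs]; nlinarith
    · have hs := hso ho
      have : 0 ≤ E.sn (n + 1) := by
        rw [hs]
        apply mul_nonneg hx'.le
        rcases E.he (n + 1) with h9 | h9 <;> rw [h9] <;> push_cast <;> linarith
      linarith

/-- The good region. -/
def Good (θ x s : ℝ) : Prop :=
  s ≤ (1 + θ) / 3 - (x - θ) / 40 ∧ s ≤ (1 + θ) / 3 + 9 / 20 * (x - θ)

lemma inv2 (E : ANIE α) (θ : ℝ) (hθ : θ * (3 + θ) = 1) (hl : 3027 / 10000 < θ)
    (hu : θ < 3028 / 10000) (n : ℕ) :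
    Good θ (E.abar n) (E.sn n) ∨ (E.a (n + 1) = 2 ∧ E.e (n + 1) = 1) := by
  induction n with
  | zero =>
    left
    rw [abar_zero, sn_zero]
    constructor <;> linarith
  | succ n ih =>
    by_cases hn : E.a (n + 2) = 2 ∧ E.e (n + 2) = 1
    · exact Or.inr hn
    left
    obtain ⟨i1, i2, i3, i4⟩ := E.inv1 n
    have hx0 := E.abar_nonneg n
    have hx' := E.abar_pos n
    have hr := E.abar_rec n
    have hso := E.sn_odd n
    have hse := E.sn_even n
    have hac := E.a_cases n
    have hk := E.key3 n
    generalize E.abar (n + 1) = x' at *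
    generalize E.abar n = x at *
    generalize E.sn (n + 1) = s' at *
    generalize E.sn n = s at *
    rcases hac with h | h | ⟨h, ho⟩ | ⟨h, ho⟩
    · have hs := hse (by rw [h]; decide)
      rw [h] at hr
      rcases E.he (n + 1) with he | he
      · rw [he] at hr hs
        push_cast at hr hs
        have h1 : x' ≤ 1 / 2 := by nlinarith
        have h2 : 1 / 3 ≤ x' := by nlinarith
        have h3 : s' ≤ 1 / 4 := by rw [hs]; nlinarith
        constructor <;> linarith
      · have i2 := i2 he
        rw [he] at hr hs
        push_cast at hr hs
        have h1 : x' ≤ 2 / 3 := by nlinarith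
        have h2 : 1 / 2 ≤ x' := by nlinarith
        have h3 : s' ≤ 1 / 3 := by rw [hs]; nlinarith
        constructor <;> linarith
    · have hs := hso (by rw [h]; decide)
      rcases E.he (n + 1) with he | he
      · have hg : Good θ x s := by
          rcases ih with h1 | h1
          · exact h1
          · omega
        obtain ⟨g1, g2⟩ := hg
        rw [h, he] at hr
        rw [he] at hs
        push_cast at hr hs
        have hy : x' - θ = - x' * (θ * (x - θ)) := by
          linear_combination (-x') * hθ - (-θ) * hr
        have hw : s' - (1 + θ) / 3 = x' * ((s - (1 + θ) / 3) - (1 + θ) / 3 * (x - θ)) := by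
          rw [hs]
          linear_combination (-(1 + θ) / 3) * hr * (-1) + x' / 3 * hθ * (-1)
        constructor
        · suffices (s' - (1 + θ) / 3) + (x' - θ) / 40 ≤ 0 by linarith
          rw [hy, hw]
          have : (s - (1 + θ) / 3) - (1 + θ) / 3 * (x - θ) - θ * (x - θ) / 40 ≤ 0 := by
            rcases le_total x θ with hxt | hxt <;> nlinarith
          nlinarith
        · suffices (s' - (1 + θ) / 3) - 9 / 20 * (x' - θ) ≤ 0 by linarith
          rw [hy, hw]
          have : (s - (1 + θ) / 3) - (1 + θ) / 3 * (x - θ) + 9 / 20 * (θ * (x - θ)) ≤ 0 := by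
            rcases le_total x θ with hxt | hxt <;> nlinarith
          nlinarith
      · have i2 := i2 he
        have hk := hk h he hn
        rw [h, he] at hr
        rw [he] at hs
        push_cast at hr hs
        have h1 : x' ≤ 2 / 5 := by nlinarith
        have h2 : 1 / 3 ≤ x' := by nlinarith
        have h3 : s' ≤ 4418 / 10000 - x' / 40 := by
          rw [hs]; nlinarith [mul_le_mul_of_nonneg_left hk hx'.le]
        constructor <;> linarith
    · have hs := hse ho
      have hb : x' * 4 ≤ x' * E.a (n + 1) := mul_le_mul_of_nonneg_left h hx'.le
      have h1 : x' ≤ 2 / 7 := by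
        rcases E.he (n + 1) with he | he
        · rw [he] at hr; push_cast at hr; nlinarith
        · have i2 := i2 he
          rw [he] at hr; push_cast at hr; nlinarith
      have h3 : s' ≤ x' / 2 := by
        rw [hs]
        rcases E.he (n + 1) with he | he <;> rw [he] <;> push_cast <;> nlinarith
      constructor <;> linarith
    · have hs := hso ho
      have hb : x' * 5 ≤ x' * E.a (n + 1) := mul_le_mul_of_nonneg_left h hx'.le
      have h1 : x' ≤ 2 / 9 := by
        rcases E.he (n + 1) with he | he
        · rw [he] at hr; push_cast at hr; nlinarith
        · have i2 := i2 he
          rw [he] at hr; push_cast at hr; nlinarith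
      have h3 : s' ≤ x' * (3 / 2) := by
        rw [hs]
        rcases E.he (n + 1) with he | he <;> rw [he] <;> push_cast <;> nlinarith
      constructor <;> linarith

end ANIE

/-- Lemma 5: for an adjusted nearest integer expansion with `liminf a_i = 2`, if
`ε_{i-2} a_{i-2} = -2` (here `i - 3 = j`, so `ε_{j+1} a_{j+1} = -2`) and `σ d_{i-3}^+ ≤ 0`,
then `(3 - ᾱ_{i-3} - σ d_{i-3}^-)/((11-√10)/3 - ᾱ_{i-3})` is at least its value at
`ᾱ_{i-3} = θ_1 = (√13-3)/2`. -/
theorem stmt12 (α : ℝ) (hirr : Irrational α) (h0 : 0 < α) (h12 : α < 1 / 2)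
    (E : ANIE α) (hfreq : ∃ᶠ i in Filter.atTop, E.a i = 2)
    (θ1 : ℝ) (hθ1 : θ1 = (Real.sqrt 13 - 3) / 2)
    (j : ℕ) (hj : 1 ≤ j) (σ : ℝ) (hσ : σ = 1 ∨ σ = -1)
    (hblock : E.e (j + 1) * E.a (j + 1) = -2)
    (hdp : σ * E.dplus j ≤ 0) :
    (3 - E.abar j - σ * E.dminus j) / ((11 - Real.sqrt 10) / 3 - E.abar j) ≥
      (3 - θ1 - θ1 / (1 - θ1)) / ((11 - Real.sqrt 10) / 3 - θ1) := by
  have hs13 : Real.sqrt 13 ^ 2 = 13 := Real.sq_sqrt (by norm_num)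
  have hs10 : Real.sqrt 10 ^ 2 = 10 := Real.sq_sqrt (by norm_num)
  have hp10 : 0 ≤ Real.sqrt 10 := Real.sqrt_nonneg _
  have hp13 : 0 ≤ Real.sqrt 13 := Real.sqrt_nonneg _
  have hθ : θ1 * (3 + θ1) = 1 := by rw [hθ1]; linear_combination hs13 / 4
  have hl : 3027 / 10000 < θ1 := by rw [hθ1]; nlinarith
  have hu : θ1 < 3028 / 10000 := by rw [hθ1]; nlinarith
  have hc1 : Real.sqrt 10 < 3163 / 1000 := by nlinarith
  have hc2 : 3162 / 1000 < Real.sqrt 10 := by nlinarith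
  have hst : θ1 / (1 - θ1) = (1 + θ1) / 3 := by
    rw [div_eq_div_iff (by linarith) (by norm_num)]
    linear_combination hθ
  rw [hst]
  have hae : E.a (j + 1) = 2 ∧ E.e (j + 1) = -1 := by
    rcases E.he (j + 1) with h | h
    · rw [h] at hblock
      have := E.ha (j + 1) (by omega)
      omega
    · rw [h] at hblock
      exact ⟨by omega, h⟩
  obtain ⟨-, i2, i3, i4⟩ := E.inv1 j
  have i2 := i2 hae.2
  have hx0 := E.abar_nonneg j
  have hg : ANIE.Good θ1 (E.abar j) (E.sn j) := by
    rcases E.inv2 θ1 hθ hl hu j with h | h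
    · exact h
    · omega
  have hg2 : ANIE.Good θ1 (E.abar j) (σ * E.dminus j) := by
    have hcase : σ * E.dminus j = E.sn j ∨ σ * E.dminus j = -E.sn j := by
      unfold ANIE.sn
      rcases hσ with h | h <;> rcases neg_one_pow_eq_or ℝ (E.oddIdx j) with h' | h' <;>
        rw [h, h'] <;> simp
    rcases hcase with h | h
    · rw [h]; exact hg
    · rw [h]; constructor <;> linarith
  obtain ⟨g1, g2⟩ := hg2
  generalize σ * E.dminus j = d at *
  generalize E.abar j = x at *
  generalize Real.sqrt 10 = r at *
  rw [ge_iff_le, div_le_div_iff₀ (by linarith) (by linarith)]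
  rcases le_total x θ1 with h | h
  · nlinarith
  · nlinarith
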